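/- Let γ : ℝ → ℝ³ be a simple closed spherical curve of length L, parametrized by arclength, with curvature κ(s) = ‖γ''(s)‖, and let A be the area (2-dimensional Hausdorff measure) of one of the two connected components of the complement of the image of γ in the unit sphere S². If there exists a nonzero smooth function f : ℝ² → ℝ, 2π-periodic in t and L-periodic in s, with ∫₀^{2π} ∫₀^L [ (1 + A²/L²) (∂f/∂t)² + 4 (∂f/∂s)² + (4A/L) (∂f/∂t)(∂f/∂s) + κ(s)² f² ] ds dt = (4π²/L²) ∫₀^{2π} ∫₀^L f² ds dt (i.e., equality holds in the bound 4π²/L² ≤ μ₁(P_{A,L})), then the curvature κ is constant. -/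

import Mathlib

open Real MeasureTheory

/-!
Completing the square, the quadratic form is `4 (∂ₛf + B ∂ₜf)² + (∂ₜf)² + κ² f²` with
`B = A / (2L)`. Let `Θ = ∫ κ` over one period and let `φ` be the primitive of `(π / Θ) κ`, which
grows by `π` over one period. Then `cos φ · f` and `sin φ · f` are antiperiodic in `s` and vanish
together with `cos φ`, respectively `sin φ`; the Dirichlet form of Wirtinger's inequality along the
lines of slope `B`, applied to both, gives
`(π / L)² ∬ f² ≤ ∬ (∂ₛf + B ∂ₜf)² + (π / Θ)² κ² f²`.
If `Θ > 2π`, the Schrödinger form is therefore strictly larger than `(4π² / L²) ∬ f²`, and equality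
is impossible. If `Θ ≤ 2π`, the tangent indicatrix `γ'` is a closed curve of length at most `2π`
which lies in no open hemisphere, and the equality case of Fenchel's theorem says that it is a great
circle. Then `γ` is planar; its inner product with the principal normal `n` is constant, and
`κ ⟪γ, n⟫ = -1` because `γ` is spherical, so `κ` is constant.
-/

open Set Filter Topology InnerProductGeometry

section Wirtinger

variable {E : Type*} [NormedAddCommGroup E] [InnerProductSpace ℝ E] {a b : ℝ} {y y' : ℝ → E}

lemma mul_integral_norm_sq_le_of_riccati {w : ℝ → ℝ} {q : ℝ} (hab : a ≤ b)
    (hy : ∀ s ∈ Icc a b, HasDerivAt y (y' s) s) (hy' : ContinuousOn y' (Icc a b))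
    (hya : y a = 0) (hyb : y b = 0) (hw : ∀ s ∈ Icc a b, HasDerivAt w (-(q + w s ^ 2)) s) :
    q * ∫ s in a..b, ‖y s‖ ^ 2 ≤ ∫ s in a..b, ‖y' s‖ ^ 2 := by
  have hyc : ContinuousOn y (Icc a b) := fun s hs ↦ (hy s hs).continuousAt.continuousWithinAt
  have hwc : ContinuousOn w (Icc a b) := fun s hs ↦ (hw s hs).continuousAt.continuousWithinAt
  have integrable {g : ℝ → ℝ} (hg : ContinuousOn g (Icc a b)) : IntervalIntegrable g volume a b :=
    hg.intervalIntegrable_of_Icc hab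
  have boundary_term : ∫ s in a..b,
      (-(q + w s ^ 2) * ‖y s‖ ^ 2 + w s * (2 * inner ℝ (y s) (y' s))) = 0 := by
    rw [intervalIntegral.integral_eq_sub_of_hasDerivAt (f := fun s ↦ w s * ‖y s‖ ^ 2)
      (fun s hs ↦ ?_) (integrable (by fun_prop))]
    · simp [hya, hyb]
    · rw [uIcc_of_le hab] at hs
      exact (hw s hs).mul (hy s hs).norm_sq
  calc q * ∫ s in a..b, ‖y s‖ ^ 2
      = ∫ s in a..b, (q * ‖y s‖ ^ 2
          + (-(q + w s ^ 2) * ‖y s‖ ^ 2 + w s * (2 * inner ℝ (y s) (y' s)))) := by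
        rw [intervalIntegral.integral_add (integrable (by fun_prop)) (integrable (by fun_prop)),
          boundary_term, intervalIntegral.integral_const_mul, add_zero]
    _ ≤ ∫ s in a..b, ‖y' s‖ ^ 2 := by
        refine intervalIntegral.integral_mono_on hab (integrable (by fun_prop))
          (integrable (by fun_prop)) fun s _ ↦ ?_
        have completed_square := norm_sub_sq_real (y' s) (w s • y s)
        rw [inner_smul_right, real_inner_comm, norm_smul, mul_pow, norm_eq_abs, sq_abs]
          at completed_square
        linarith [sq_nonneg ‖y' s - w s • y s‖]

lemma hasDerivAt_neg_mul_tan_mul_sub {μ m s : ℝ} (h : cos (μ * (s - m)) ≠ 0) :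
    HasDerivAt (fun s ↦ -μ * tan (μ * (s - m))) (-(μ ^ 2 + (-μ * tan (μ * (s - m))) ^ 2)) s := by
  have h_affine : HasDerivAt (fun s ↦ μ * (s - m)) μ s := by
    simpa using ((hasDerivAt_id s).sub_const m).const_mul μ
  refine (((hasDerivAt_tan h).comp s h_affine).const_mul (-μ)).congr_deriv ?_
  rw [← inv_one_add_tan_sq h, one_div, inv_inv]
  ring

theorem sq_mul_integral_norm_sq_le_of_mul_sub_lt_pi {μ : ℝ} (hab : a ≤ b) (hμ : 0 ≤ μ)
    (hμπ : μ * (b - a) < π) (hy : ∀ s ∈ Icc a b, HasDerivAt y (y' s) s)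
    (hy' : ContinuousOn y' (Icc a b)) (hya : y a = 0) (hyb : y b = 0) :
    μ ^ 2 * ∫ s in a..b, ‖y s‖ ^ 2 ≤ ∫ s in a..b, ‖y' s‖ ^ 2 := by
  refine mul_integral_norm_sq_le_of_riccati hab hy hy' hya hyb fun s hs ↦
    hasDerivAt_neg_mul_tan_mul_sub (m := (a + b) / 2) (cos_pos_of_mem_Ioo ⟨?_, ?_⟩).ne'
  · nlinarith [mul_nonneg hμ (sub_nonneg.2 hs.1)]
  · nlinarith [mul_nonneg hμ (sub_nonneg.2 hs.2)]

theorem wirtinger_inequality (hab : a < b) (hy : ∀ s ∈ Icc a b, HasDerivAt y (y' s) s)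
    (hy' : ContinuousOn y' (Icc a b)) (hya : y a = 0) (hyb : y b = 0) :
    (π / (b - a)) ^ 2 * ∫ s in a..b, ‖y s‖ ^ 2 ≤ ∫ s in a..b, ‖y' s‖ ^ 2 := by
  have hμ_pos : 0 < π / (b - a) := div_pos pi_pos (sub_pos.2 hab)
  have h_tendsto : Tendsto (fun μ : ℝ ↦ μ ^ 2 * ∫ s in a..b, ‖y s‖ ^ 2) (𝓝[<] (π / (b - a)))
      (𝓝 ((π / (b - a)) ^ 2 * ∫ s in a..b, ‖y s‖ ^ 2)) :=
    (Continuous.tendsto (by fun_prop) _).mono_left nhdsWithin_le_nhds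
  refine le_of_tendsto h_tendsto ?_
  filter_upwards [Ioo_mem_nhdsLT hμ_pos] with μ hμ
  exact sq_mul_integral_norm_sq_le_of_mul_sub_lt_pi hab.le hμ.1.le
    ((lt_div_iff₀ (sub_pos.2 hab)).1 hμ.2) hy hy' hya hyb

end Wirtinger

section Torus

variable {E : Type*} [NormedAddCommGroup E] [NormedSpace ℝ E] {a b c d T L : ℝ}

lemma integral_integral_swap_of_continuous {g : ℝ × ℝ → E} (hg : Continuous g) (hab : a ≤ b) :
    ∫ t in c..d, ∫ s in a..b, g (t, s) = ∫ s in a..b, ∫ t in c..d, g (t, s) := by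
  simp only [intervalIntegral.integral_of_le hab]
  refine intervalIntegral_integral_swap (f := fun t s ↦ g (t, s)) ?_
  rw [Measure.prod_restrict]
  exact (hg.continuousOn.integrableOn_compact (isCompact_uIcc.prod isCompact_Icc)).mono_set
    (prod_mono uIoc_subset_uIcc Ioc_subset_Icc_self)

lemma continuous_integral_snd {g : ℝ × ℝ → E} (hg : Continuous g) :
    Continuous fun t ↦ ∫ s in a..b, g (t, s) :=
  intervalIntegral.continuous_parametric_intervalIntegral_of_continuous' (f := fun t s ↦ g (t, s))
    hg a b

lemma integral_integral_add {g h : ℝ × ℝ → E} (hg : Continuous g) (hh : Continuous h) :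
    ∫ t in c..d, ∫ s in a..b, (g (t, s) + h (t, s)) =
      (∫ t in c..d, ∫ s in a..b, g (t, s)) + ∫ t in c..d, ∫ s in a..b, h (t, s) := by
  rw [← intervalIntegral.integral_add ((continuous_integral_snd hg).intervalIntegrable _ _)
    ((continuous_integral_snd hh).intervalIntegrable _ _)]
  refine intervalIntegral.integral_congr fun t _ ↦ intervalIntegral.integral_add ?_ ?_
  all_goals exact Continuous.intervalIntegrable (by fun_prop) _ _

lemma integral_integral_comp_shear {g : ℝ × ℝ → E} (hg : Continuous g)
    (hgT : Function.Periodic g (T, 0)) (hab : a ≤ b) (B : ℝ) :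
    ∫ t in 0..T, ∫ s in a..b, g (t + B * s, s) = ∫ t in 0..T, ∫ s in a..b, g (t, s) := by
  have shift_invariant (s : ℝ) : ∫ t in 0..T, g (t + B * s, s) = ∫ t in 0..T, g (t, s) := by
    have h_periodic : Function.Periodic (fun t ↦ g (t, s)) T := fun t ↦ by simpa using hgT (t, s)
    rw [intervalIntegral.integral_comp_add_right (fun t ↦ g (t, s)), zero_add, add_comm T,
      h_periodic.intervalIntegral_add_eq _ 0, zero_add]
  rw [integral_integral_swap_of_continuous (g := fun p ↦ g (p.1 + B * p.2, p.2)) (by fun_prop) hab,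
    integral_integral_swap_of_continuous hg hab]
  simp only [shift_invariant]

lemma integral_integral_pos_of_periodic {g : ℝ × ℝ → ℝ} (hg : Continuous g) (hT : 0 < T)
    (hL : 0 < L) (hgT : Function.Periodic g (T, 0)) (hgL : Function.Periodic g (0, L))
    (hg_nonneg : ∀ p, 0 ≤ g p) (hg_ne : ∃ p, g p ≠ 0) :
    0 < ∫ t in 0..T, ∫ s in 0..L, g (t, s) := by
  obtain ⟨⟨t₀, s₀⟩, hg₀⟩ := hg_ne
  have integral_period_pos {h : ℝ → ℝ} {R r₀ : ℝ} (hR : 0 < R) (hh : Continuous h)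
      (hh_periodic : Function.Periodic h R) (hh_nonneg : ∀ r, 0 ≤ h r) (hr₀ : 0 < h r₀) :
      0 < ∫ r in 0..R, h r := by
    have h_pos : 0 < ∫ r in r₀..r₀ + R, h r := intervalIntegral.integral_pos (by linarith)
      hh.continuousOn (fun r _ ↦ hh_nonneg r) ⟨r₀, left_mem_Icc.2 (by linarith), hr₀⟩
    rwa [hh_periodic.intervalIntegral_add_eq r₀ 0, zero_add] at h_pos
  refine integral_period_pos (r₀ := t₀) hT (continuous_integral_snd hg)
    (fun t ↦ intervalIntegral.integral_congr fun s _ ↦ by simpa using hgT (t, s))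
    (fun t ↦ intervalIntegral.integral_nonneg hL.le fun s _ ↦ hg_nonneg _) ?_
  exact integral_period_pos (r₀ := s₀) hL (by fun_prop) (fun s ↦ by simpa using hgL (t₀, s))
    (fun s ↦ hg_nonneg _) ((hg_nonneg _).lt_of_ne' hg₀)

end Torus

lemma periodic_fderiv {V F : Type*} [NormedAddCommGroup V] [NormedSpace ℝ V]
    [NormedAddCommGroup F] [NormedSpace ℝ F] {f : V → F} {v : V} (hf : Function.Periodic f v) :
    Function.Periodic (fderiv ℝ f) v := fun x ↦ by
  rw [← fderiv_comp_add_right, hf.funext]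

section TorusInner

variable {E : Type*} [NormedAddCommGroup E] [InnerProductSpace ℝ E] {a b T L : ℝ} {f : ℝ × ℝ → E}

theorem wirtinger_strip (hf : ContDiff ℝ 1 f) (hfT : Function.Periodic f (T, 0)) (hT : 0 ≤ T)
    (hab : a < b) (hfa : ∀ t, f (t, a) = 0) (hfb : ∀ t, f (t, b) = 0) (B : ℝ) :
    (π / (b - a)) ^ 2 * ∫ t in 0..T, ∫ s in a..b, ‖f (t, s)‖ ^ 2 ≤
      ∫ t in 0..T, ∫ s in a..b, ‖fderiv ℝ f (t, s) (B, 1)‖ ^ 2 := by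
  have along_line (t : ℝ) : (π / (b - a)) ^ 2 * ∫ s in a..b, ‖f (t + B * s, s)‖ ^ 2 ≤
      ∫ s in a..b, ‖fderiv ℝ f (t + B * s, s) (B, 1)‖ ^ 2 := by
    refine wirtinger_inequality hab (fun s _ ↦ ?_) (by fun_prop) (hfa _) (hfb _)
    have h_line : HasDerivAt (fun s ↦ (t + B * s, s)) (B, 1) s := by
      simpa using (((hasDerivAt_id s).const_mul B).const_add t).prodMk (hasDerivAt_id s)
    exact ((hf.differentiable one_ne_zero) _).hasFDerivAt.comp_hasDerivAt s h_line
  have hf_cont := hf.continuous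
  rw [← integral_integral_comp_shear (g := fun p ↦ ‖f p‖ ^ 2) (by fun_prop)
      (hfT.comp fun x ↦ ‖x‖ ^ 2) hab.le B,
    ← integral_integral_comp_shear (g := fun p ↦ ‖fderiv ℝ f p (B, 1)‖ ^ 2) (by fun_prop)
      ((periodic_fderiv hfT).comp fun D ↦ ‖D (B, 1)‖ ^ 2) hab.le B,
    ← intervalIntegral.integral_const_mul]
  exact intervalIntegral.integral_mono_on hT
    (((continuous_integral_snd (g := fun p ↦ ‖f (p.1 + B * p.2, p.2)‖ ^ 2)
      (by fun_prop)).const_mul _).intervalIntegrable _ _)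
    ((continuous_integral_snd (g := fun p ↦ ‖fderiv ℝ f (p.1 + B * p.2, p.2) (B, 1)‖ ^ 2)
      (by fun_prop)).intervalIntegrable _ _) fun t _ ↦ along_line t

lemma exists_eq_zero_of_antiperiodic {c : ℝ → ℝ} (hc : Continuous c)
    (hcL : Function.Antiperiodic c L) : ∃ s, c s = 0 := by
  have h_neg : c L = -c 0 := by simpa using hcL 0
  rcases le_total (c 0) 0 with h | h
  · exact mem_range_of_exists_le_of_exists_ge hc ⟨0, h⟩ ⟨L, by linarith⟩
  · exact mem_range_of_exists_le_of_exists_ge hc ⟨L, by linarith⟩ ⟨0, h⟩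

lemma wirtinger_antiperiodic_smul {c c' : ℝ → ℝ} (hc : ∀ s, HasDerivAt c (c' s) s)
    (hc' : Continuous c') (hcL : Function.Antiperiodic c L) (hL : 0 < L) (hf : ContDiff ℝ 1 f)
    (hfT : Function.Periodic f (T, 0)) (hfL : Function.Periodic f (0, L)) (hT : 0 ≤ T) (B : ℝ) :
    (π / L) ^ 2 * ∫ t in 0..T, ∫ s in 0..L, ‖c s • f (t, s)‖ ^ 2 ≤
      ∫ t in 0..T, ∫ s in 0..L, ‖c s • fderiv ℝ f (t, s) (B, 1) + c' s • f (t, s)‖ ^ 2 := by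
  have hc_contDiff : ContDiff ℝ 1 c := contDiff_one_iff_deriv.2
    ⟨fun s ↦ (hc s).differentiableAt, by rwa [funext fun s ↦ (hc s).deriv]⟩
  obtain ⟨a, ha⟩ := exists_eq_zero_of_antiperiodic hc_contDiff.continuous hcL
  have hc'L : Function.Antiperiodic c' L := fun s ↦ by
    have h_shift := (hc (s + L)).comp_add_const s L
    exact (hcL.funext ▸ h_shift).unique (hc s).neg
  have hDf_product (p : ℝ × ℝ) : fderiv ℝ (fun p ↦ c p.2 • f p) p (B, 1) =
      c p.2 • fderiv ℝ f p (B, 1) + c' p.2 • f p := by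
    have hc_snd : HasFDerivAt (fun p : ℝ × ℝ ↦ c p.2) (c' p.2 • .snd ℝ ℝ ℝ) p :=
      (hc p.2).comp_hasFDerivAt p hasFDerivAt_snd
    rw [(hc_snd.fun_smul (hf.differentiable one_ne_zero p).hasFDerivAt).fderiv]
    simp
  have strip := wirtinger_strip (f := fun p ↦ c p.2 • f p) (a := a) (b := a + L)
    (by fun_prop) (fun p ↦ by simp [hfT p]) hT (by linarith) (by simp [ha]) (by simp [hcL a, ha]) B
  have hfL' (t s : ℝ) : f (t, s + L) = f (t, s) := by simpa using hfL (t, s)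
  have hDfL (t s : ℝ) : fderiv ℝ f (t, s + L) = fderiv ℝ f (t, s) := by
    simpa using periodic_fderiv hfL (t, s)
  have period₁ (t : ℝ) : Function.Periodic (fun s ↦ ‖c s • f (t, s)‖ ^ 2) L := fun s ↦ by
    simp [hcL s, hfL']
  have period₂ (t : ℝ) : Function.Periodic
      (fun s ↦ ‖c s • fderiv ℝ f (t, s) (B, 1) + c' s • f (t, s)‖ ^ 2) L := fun s ↦ by
    simp only [hcL s, hc'L s, hfL', hDfL, neg_smul, ← neg_add, norm_neg]
  simpa only [add_sub_cancel_left, hDf_product, (period₁ _).intervalIntegral_add_eq a 0,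
    (period₂ _).intervalIntegral_add_eq a 0, zero_add] using strip

lemma norm_sq_add_norm_sq_rotate (r k : ℝ) (u v : E) :
    ‖cos r • u + (-sin r * k) • v‖ ^ 2 + ‖sin r • u + (cos r * k) • v‖ ^ 2 =
      ‖u‖ ^ 2 + k ^ 2 * ‖v‖ ^ 2 := by
  simp only [norm_add_sq_real, norm_smul, mul_pow, norm_eq_abs, sq_abs, inner_smul_left,
    inner_smul_right, conj_trivial, neg_sq]
  linear_combination (‖u‖ ^ 2 + k ^ 2 * ‖v‖ ^ 2) * sin_sq_add_cos_sq r

theorem wirtinger_rotation {φ φ' : ℝ → ℝ} (hφ : ∀ s, HasDerivAt φ (φ' s) s) (hφ' : Continuous φ')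
    (hφL : ∀ s, φ (s + L) = φ s + π) (hL : 0 < L) (hf : ContDiff ℝ 1 f)
    (hfT : Function.Periodic f (T, 0)) (hfL : Function.Periodic f (0, L)) (hT : 0 ≤ T) (B : ℝ) :
    (π / L) ^ 2 * ∫ t in 0..T, ∫ s in 0..L, ‖f (t, s)‖ ^ 2 ≤
      ∫ t in 0..T, ∫ s in 0..L,
        (‖fderiv ℝ f (t, s) (B, 1)‖ ^ 2 + φ' s ^ 2 * ‖f (t, s)‖ ^ 2) := by
  have hφ_cont : Continuous φ := continuous_iff_continuousAt.2 fun s ↦ (hφ s).continuousAt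
  have hf_cont := hf.continuous
  -- `cos φ • f` and `sin φ • f` are antiperiodic in `s`, so each vanishes on a line `s = const`.
  have h_cos := wirtinger_antiperiodic_smul (c := fun s ↦ cos (φ s)) (fun s ↦ (hφ s).cos)
    (by fun_prop) (fun s ↦ by simp [hφL, cos_add_pi]) hL hf hfT hfL hT B
  have h_sin := wirtinger_antiperiodic_smul (c := fun s ↦ sin (φ s)) (fun s ↦ (hφ s).sin)
    (by fun_prop) (fun s ↦ by simp [hφL, sin_add_pi]) hL hf hfT hfL hT B
  have h_sum := add_le_add h_cos h_sin
  rw [← mul_add,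
    ← integral_integral_add (g := fun p ↦ ‖cos (φ p.2) • f p‖ ^ 2)
      (h := fun p ↦ ‖sin (φ p.2) • f p‖ ^ 2) (by fun_prop) (by fun_prop),
    ← integral_integral_add
      (g := fun p ↦ ‖cos (φ p.2) • fderiv ℝ f p (B, 1) + (-sin (φ p.2) * φ' p.2) • f p‖ ^ 2)
      (h := fun p ↦ ‖sin (φ p.2) • fderiv ℝ f p (B, 1) + (cos (φ p.2) * φ' p.2) • f p‖ ^ 2)
      (by fun_prop) (by fun_prop)] at h_sum
  simpa only [norm_sq_add_norm_sq_rotate, norm_smul, mul_pow, norm_eq_abs, sq_abs, ← add_mul,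
    cos_sq_add_sin_sq, one_mul] using h_sum

end TorusInner

section Schroedinger

variable {T L : ℝ} {κ : ℝ → ℝ} {f : ℝ × ℝ → ℝ}

lemma integral_add_period (hκ : Continuous κ) (hκL : Function.Periodic κ L) (s : ℝ) :
    ∫ u in 0..s + L, κ u = (∫ u in 0..s, κ u) + ∫ u in 0..L, κ u := by
  rw [← intervalIntegral.integral_add_adjacent_intervals (hκ.intervalIntegrable 0 s)
    (hκ.intervalIntegrable s _), hκL.intervalIntegral_add_eq s 0, zero_add]

lemma four_mul_pi_div_sq_mul_integral_sq_le (hκ : Continuous κ) (hκL : Function.Periodic κ L)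
    (hκ_ne : ∫ s in 0..L, κ s ≠ 0) (hL : 0 < L) (hT : 0 ≤ T) (hf : ContDiff ℝ 1 f)
    (hfT : Function.Periodic f (T, 0)) (hfL : Function.Periodic f (0, L)) (B : ℝ) :
    4 * π ^ 2 / L ^ 2 * ∫ t in 0..T, ∫ s in 0..L, f (t, s) ^ 2 ≤
      ∫ t in 0..T, ∫ s in 0..L, (4 * fderiv ℝ f (t, s) (B, 1) ^ 2 +
        (2 * π / ∫ u in 0..L, κ u) ^ 2 * κ s ^ 2 * f (t, s) ^ 2) := by
  set Θ := ∫ u in 0..L, κ u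
  have h_rotation := wirtinger_rotation (φ := fun s ↦ π / Θ * ∫ u in 0..s, κ u)
    (φ' := fun s ↦ π / Θ * κ s)
    (fun s ↦ (hκ.integral_hasStrictDerivAt 0 s).hasDerivAt.const_mul _) (by fun_prop)
    (fun s ↦ by rw [integral_add_period hκ hκL, mul_add, div_mul_cancel₀ _ hκ_ne])
    hL hf hfT hfL hT B
  simp only [norm_eq_abs, sq_abs] at h_rotation
  calc _ = 4 * ((π / L) ^ 2 * ∫ t in 0..T, ∫ s in 0..L, f (t, s) ^ 2) := by ring
    _ ≤ _ := mul_le_mul_of_nonneg_left h_rotation zero_le_four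
    _ = _ := by
      simp only [← intervalIntegral.integral_const_mul]
      congr! 4
      ring

lemma schroedinger_integrand_eq (hL : L ≠ 0) (D : ℝ × ℝ →L[ℝ] ℝ) (A k y : ℝ) :
    (1 + A ^ 2 / L ^ 2) * D (1, 0) ^ 2 + 4 * D (0, 1) ^ 2 + 4 * A / L * D (1, 0) * D (0, 1)
        + k ^ 2 * y ^ 2 =
      4 * D (A / (2 * L), 1) ^ 2 + D (1, 0) ^ 2 + k ^ 2 * y ^ 2 := by
  have h_split : ((A / (2 * L), 1) : ℝ × ℝ) = (A / (2 * L)) • (1, 0) + (0, 1) := by simp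
  rw [h_split, map_add, map_smul, smul_eq_mul]
  field_simp
  ring

theorem schroedinger_form_gt_of_two_pi_lt_integral (hκ : Continuous κ) (hκ_ne : ∀ s, κ s ≠ 0)
    (hκL : Function.Periodic κ L) (hκ_int : 2 * π < ∫ s in 0..L, κ s) (hL : 0 < L) (hT : 0 < T)
    (hf : ContDiff ℝ 1 f) (hfT : Function.Periodic f (T, 0)) (hfL : Function.Periodic f (0, L))
    (hf_ne : f ≠ 0) (A : ℝ) :
    4 * π ^ 2 / L ^ 2 * ∫ t in 0..T, ∫ s in 0..L, f (t, s) ^ 2 <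
      ∫ t in 0..T, ∫ s in 0..L, ((1 + A ^ 2 / L ^ 2) * fderiv ℝ f (t, s) (1, 0) ^ 2
        + 4 * fderiv ℝ f (t, s) (0, 1) ^ 2
        + 4 * A / L * fderiv ℝ f (t, s) (1, 0) * fderiv ℝ f (t, s) (0, 1)
        + κ s ^ 2 * f (t, s) ^ 2) := by
  have hΘ : 0 < ∫ s in 0..L, κ s := two_pi_pos.trans hκ_int
  set c := 2 * π / ∫ s in 0..L, κ s
  have hc : 0 < 1 - c ^ 2 :=
    sub_pos.2 (pow_lt_one₀ (div_nonneg two_pi_pos.le hΘ.le) ((div_lt_one hΘ).2 hκ_int) two_ne_zero)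
  have hf_cont := hf.continuous
  let gap (p : ℝ × ℝ) : ℝ := fderiv ℝ f p (1, 0) ^ 2 + (1 - c ^ 2) * (κ p.2 * f p) ^ 2
  have h_gap_cont : Continuous gap := by fun_prop
  have h_gap_pos : 0 < ∫ t in 0..T, ∫ s in 0..L, gap (t, s) := by
    refine integral_integral_pos_of_periodic h_gap_cont hT hL
      (fun p ↦ by simp [gap, hfT p, periodic_fderiv hfT p])
      (fun p ↦ by simp [gap, hfL p, periodic_fderiv hfL p, hκL p.2])
      (fun p ↦ by positivity) ?_
    obtain ⟨p, hp⟩ := Function.ne_iff.1 hf_ne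
    have h_weighted_ne : κ p.2 * f p ≠ 0 := mul_ne_zero (hκ_ne _) hp
    exact ⟨p, by positivity⟩
  have h_bound := four_mul_pi_div_sq_mul_integral_sq_le hκ hκL hΘ.ne' hL hT.le hf hfT hfL
    (A / (2 * L))
  calc _ < _ := lt_add_of_le_of_pos h_bound h_gap_pos
    _ = ∫ t in 0..T, ∫ s in 0..L, ((4 * fderiv ℝ f (t, s) (A / (2 * L), 1) ^ 2 +
          c ^ 2 * κ s ^ 2 * f (t, s) ^ 2) + gap (t, s)) :=
      (integral_integral_add (g := fun p ↦ 4 * fderiv ℝ f p (A / (2 * L), 1) ^ 2 +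
        c ^ 2 * κ p.2 ^ 2 * f p ^ 2) (by fun_prop) h_gap_cont).symm
    _ = _ := by
      simp only [schroedinger_integrand_eq hL.ne', gap]
      congr! 4
      ring

end Schroedinger

section SphericalCurve

variable {E : Type*} [NormedAddCommGroup E] [InnerProductSpace ℝ E]

lemma sub_arccos_monotone_of_sq_lt_one {g g' K k : ℝ → ℝ} (hg : ∀ s, HasDerivAt g (g' s) s)
    (hK : ∀ s, HasDerivAt K (k s) s) (hg_lt : ∀ s, g s ^ 2 < 1) (hk : ∀ s, 0 ≤ k s)
    (hg' : ∀ s, g' s ^ 2 ≤ (1 - g s ^ 2) * k s ^ 2) :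
    Monotone fun s ↦ K s - arccos (g s) := by
  have h_arccos (s : ℝ) : HasDerivAt (fun s ↦ arccos (g s)) (-(1 / √(1 - g s ^ 2)) * g' s) s := by
    obtain ⟨h_left, h_right⟩ := abs_lt.1 ((sq_lt_one_iff_abs_lt_one _).1 (hg_lt s))
    exact (hasDerivAt_arccos h_left.ne' h_right.ne).comp s (hg s)
  refine monotone_of_hasDerivAt_nonneg (fun s ↦ (hK s).sub (h_arccos s)) fun s ↦ ?_
  have h_sqrt : 0 < √(1 - g s ^ 2) := sqrt_pos.2 (sub_pos.2 (hg_lt s))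
  have h_speed : |g' s| ≤ √(1 - g s ^ 2) * k s := by
    refine abs_le_of_sq_le_sq ?_ (mul_nonneg h_sqrt.le (hk s))
    rw [mul_pow, sq_sqrt (sub_pos.2 (hg_lt s)).le]
    exact hg' s
  have h_quotient : -g' s / √(1 - g s ^ 2) ≤ k s := by
    rw [div_le_iff₀' h_sqrt]
    exact (neg_le_abs _).trans h_speed
  rw [Pi.zero_apply, sub_nonneg]
  convert h_quotient using 1
  ring

lemma sub_arccos_monotone_of_sq_le_one {g g' K k : ℝ → ℝ} (hg : ∀ s, HasDerivAt g (g' s) s)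
    (hK : ∀ s, HasDerivAt K (k s) s) (hg_le : ∀ s, g s ^ 2 ≤ 1) (hk : ∀ s, 0 ≤ k s)
    (hg' : ∀ s, g' s ^ 2 ≤ (1 - g s ^ 2) * k s ^ 2) :
    Monotone fun s ↦ K s - arccos (g s) := by
  -- `arccos` is not differentiable at `±1`, so `g` is approximated by `l * g` with `l < 1`.
  have scaled_monotone {l : ℝ} (hl : l ∈ Ioo (0 : ℝ) 1) :
      Monotone fun s ↦ K s - arccos (l * g s) := by
    have hl_sq : l ^ 2 < 1 := pow_lt_one₀ hl.1.le hl.2 two_ne_zero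
    refine sub_arccos_monotone_of_sq_lt_one (fun s ↦ (hg s).const_mul l) hK (fun s ↦ ?_) hk
      fun s ↦ ?_
    · nlinarith [hg_le s, sq_nonneg l]
    · nlinarith [mul_le_mul_of_nonneg_left (hg' s) (sq_nonneg l),
        mul_nonneg (sub_nonneg.2 hl_sq.le) (sq_nonneg (k s))]
  have h_tendsto (s : ℝ) :
      Tendsto (fun l : ℝ ↦ K s - arccos (l * g s)) (𝓝[<] 1) (𝓝 (K s - arccos (g s))) := by
    have h_cont : Continuous fun l : ℝ ↦ K s - arccos (l * g s) := by fun_prop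
    simpa using (h_cont.tendsto 1).mono_left nhdsWithin_le_nhds
  intro a b hab
  refine le_of_tendsto_of_tendsto (h_tendsto a) (h_tendsto b) ?_
  filter_upwards [Ioo_mem_nhdsLT one_pos] with l hl using scaled_monotone hl hab

lemma sq_inner_le_of_inner_eq_zero {u x v : E} (hu : ‖u‖ = 1) (hx : ‖x‖ = 1)
    (hxv : inner ℝ x v = 0) : inner ℝ u v ^ 2 ≤ (1 - inner ℝ u x ^ 2) * ‖v‖ ^ 2 := by
  have h_proj : inner ℝ (u - inner ℝ u x • x) v = inner ℝ u v := by
    simp [inner_sub_left, inner_smul_left, hxv]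
  have h_norm : ‖u - inner ℝ u x • x‖ ^ 2 = 1 - inner ℝ u x ^ 2 := by
    rw [norm_sub_sq_real, inner_smul_right, norm_smul, hu, hx, mul_one, norm_eq_abs, sq_abs]
    ring
  rw [← h_proj, ← h_norm, ← mul_pow, ← sq_abs]
  exact pow_le_pow_left₀ (abs_nonneg _) (abs_real_inner_le_norm _ _) 2

lemma inner_deriv_eq_zero_of_norm_eq_one {x : ℝ → E} {x' : E} {s : ℝ} (hx : HasDerivAt x x' s)
    (hx_norm : ∀ s, ‖x s‖ = 1) : inner ℝ (x s) x' = 0 := by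
  have h_const : HasDerivAt (fun _ : ℝ ↦ (1 : ℝ)) (2 * inner ℝ (x s) x') s := by
    simpa [hx_norm, Pi.pow_def] using hx.norm_sq
  linarith [h_const.unique (hasDerivAt_const s 1)]

theorem angle_le_sub_of_hasDerivAt_norm {x x' : ℝ → E} {K : ℝ → ℝ} {a b : ℝ}
    (hx : ∀ s, HasDerivAt x (x' s) s) (hx_norm : ∀ s, ‖x s‖ = 1)
    (hK : ∀ s, HasDerivAt K ‖x' s‖ s) (hab : a ≤ b) : angle (x a) (x b) ≤ K b - K a := by
  have h_mono : Monotone fun s ↦ K s - arccos (inner ℝ (x a) (x s)) := by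
    refine sub_arccos_monotone_of_sq_le_one
      (fun s ↦ by simpa using (hasDerivAt_const s (x a)).inner ℝ (hx s)) hK (fun s ↦ ?_)
      (fun s ↦ norm_nonneg _)
      fun s ↦ sq_inner_le_of_inner_eq_zero (hx_norm a) (hx_norm s)
        (inner_deriv_eq_zero_of_norm_eq_one (hx s) hx_norm)
    simpa [sq_le_one_iff_abs_le_one, hx_norm] using abs_real_inner_le_norm (x a) (x s)
  have h_end := h_mono hab
  simp only [real_inner_self_eq_norm_sq, hx_norm, one_pow, arccos_one, sub_zero] at h_end
  simp only [angle, hx_norm, mul_one, div_one]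
  linarith

lemma inner_add_nonneg_of_angle_add_angle_le_pi {x y z : E} (hx : ‖x‖ = 1) (hy : ‖y‖ = 1)
    (hz : ‖z‖ = 1) (h : angle x z + angle z y ≤ π) : 0 ≤ inner ℝ (x + y) z := by
  rw [inner_add_left, real_inner_comm z y, inner_eq_cos_angle_of_norm_eq_one hx hz,
    inner_eq_cos_angle_of_norm_eq_one hz hy]
  have h_cos : cos (π - angle z y) ≤ cos (angle x z) :=
    cos_le_cos_of_nonneg_of_le_pi (angle_nonneg _ _) (by linarith [angle_nonneg z y]) (by linarith)
  rw [cos_pi_sub] at h_cos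
  linarith

lemma angle_eq_pi_of_inner_add_eq_zero {x y : E} (hx : ‖x‖ = 1) (hy : ‖y‖ = 1)
    (hxy : inner ℝ (x + y) x = 0) : angle x y = π := by
  rw [inner_add_left, real_inner_self_eq_norm_sq, hx, real_inner_comm] at hxy
  have h_inner : inner ℝ x y = -1 := by linarith
  rw [angle, hx, hy, mul_one, div_one, h_inner, arccos_neg_one]

lemma deriv_left_eq_zero_of_nonneg_of_eq {g g' : ℝ → ℝ} {a b : ℝ} (hab : a < b)
    (hg : ∀ s, HasDerivAt g (g' s) s) (hg' : Continuous g') (hg'_nonneg : ∀ s ∈ Icc a b, 0 ≤ g' s)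
    (hgab : g a = g b) : g' a = 0 := by
  by_contra h_ne
  have h_pos : 0 < ∫ s in a..b, g' s := intervalIntegral.integral_pos hab hg'.continuousOn
    (fun s hs ↦ hg'_nonneg s (Ioc_subset_Icc_self hs))
    ⟨a, left_mem_Icc.2 hab.le, (hg'_nonneg a (left_mem_Icc.2 hab.le)).lt_of_ne' h_ne⟩
  rw [intervalIntegral.integral_eq_sub_of_hasDerivAt (fun s _ ↦ hg s)
    (hg'.intervalIntegrable _ _), hgab, sub_self] at h_pos
  exact h_pos.false

lemma periodic_deriv {F : Type*} [NormedAddCommGroup F] [NormedSpace ℝ F] {g : ℝ → F} {L : ℝ}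
    (hgL : Function.Periodic g L) : Function.Periodic (deriv g) L := fun s ↦ by
  rw [← deriv_comp_add_const, hgL.funext]

lemma norm_cos_smul_add_sin_smul {u v : E} (hu : ‖u‖ = 1) (hv : ‖v‖ = 1)
    (huv : inner ℝ u v = 0) (r : ℝ) : ‖cos r • u + sin r • v‖ = 1 := by
  rw [← sq_eq_sq₀ (norm_nonneg _) zero_le_one]
  simp [norm_add_sq_real, norm_smul, inner_smul_left, inner_smul_right, hu, hv, huv]

lemma eq_cos_smul_add_sin_smul_of_inner_eq {u v z : E} {r : ℝ} (hu : ‖u‖ = 1) (hv : ‖v‖ = 1)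
    (huv : inner ℝ u v = 0) (hz : ‖z‖ = 1) (huz : inner ℝ u z = cos r)
    (hvz : inner ℝ v z = sin r) : z = cos r • u + sin r • v := by
  refine ((inner_eq_one_iff_of_norm_eq_one (𝕜 := ℝ)
    (norm_cos_smul_add_sin_smul hu hv huv r) hz).1 ?_).symm
  rw [inner_add_left, real_inner_smul_left, real_inner_smul_left, huz, hvz, ← sq, ← sq,
    cos_sq_add_sin_sq]

section Fenchel

variable {γ : ℝ → E} {L : ℝ}

/-- The total curvature of the arc of `γ` from `a` to `b`, for a unit-speed curve `γ` in an
arbitrary inner product space: the integral of the curvature `‖γ''‖`, that is, the length of the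
tangent indicatrix `γ'`. It is negative when `b < a` and the arc is not straight. -/
noncomputable def totalCurvature (γ : ℝ → E) (a b : ℝ) : ℝ :=
  ∫ s in a..b, ‖deriv (deriv γ) s‖

lemma continuous_norm_deriv_deriv (hγ : ContDiff ℝ 2 γ) :
    Continuous fun s ↦ ‖deriv (deriv γ) s‖ :=
  (contDiff_succ_iff_deriv.1 hγ).2.2.continuous_deriv_one.norm

lemma norm_deriv_deriv_periodic (hγL : Function.Periodic γ L) :
    Function.Periodic (fun s ↦ ‖deriv (deriv γ) s‖) L :=
  (periodic_deriv (periodic_deriv hγL)).comp _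

lemma hasDerivAt_totalCurvature (hγ : ContDiff ℝ 2 γ) (a s : ℝ) :
    HasDerivAt (totalCurvature γ a) ‖deriv (deriv γ) s‖ s :=
  ((continuous_norm_deriv_deriv hγ).integral_hasStrictDerivAt a s).hasDerivAt

lemma totalCurvature_add_totalCurvature (hγ : ContDiff ℝ 2 γ) (a b c : ℝ) :
    totalCurvature γ a b + totalCurvature γ b c = totalCurvature γ a c :=
  intervalIntegral.integral_add_adjacent_intervals
    ((continuous_norm_deriv_deriv hγ).intervalIntegrable _ _)
    ((continuous_norm_deriv_deriv hγ).intervalIntegrable _ _)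

lemma totalCurvature_period (hγL : Function.Periodic γ L) (a : ℝ) :
    totalCurvature γ a (a + L) = totalCurvature γ 0 L := by
  simpa only [totalCurvature, zero_add] using
    (norm_deriv_deriv_periodic hγL).intervalIntegral_add_eq a 0

lemma angle_deriv_le_totalCurvature (hγ : ContDiff ℝ 2 γ) (hγ_speed : ∀ s, ‖deriv γ s‖ = 1)
    {a b : ℝ} (hab : a ≤ b) : angle (deriv γ a) (deriv γ b) ≤ totalCurvature γ a b := by
  have h_angle := angle_le_sub_of_hasDerivAt_norm
    (fun s ↦ (hγ.differentiable_deriv_two s).hasDerivAt) hγ_speed (hasDerivAt_totalCurvature hγ a)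
    hab
  simpa [totalCurvature] using h_angle

lemma inner_add_deriv_nonneg_of_totalCurvature_le_pi (hγ : ContDiff ℝ 2 γ)
    (hγL : Function.Periodic γ L) (hγ_speed : ∀ s, ‖deriv γ s‖ = 1) {a h s : ℝ}
    (h_forth : totalCurvature γ a h ≤ π) (h_back : totalCurvature γ h (a + L) ≤ π)
    (hs : s ∈ Icc a (a + L)) : 0 ≤ inner ℝ (deriv γ a + deriv γ h) (deriv γ s) := by
  have h_add := totalCurvature_add_totalCurvature hγ
  have angle_le {r s : ℝ} (hrs : r ≤ s) := angle_deriv_le_totalCurvature hγ hγ_speed hrs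
  rcases le_total s h with hsh | hhs
  · refine inner_add_nonneg_of_angle_add_angle_le_pi (hγ_speed _) (hγ_speed _) (hγ_speed _) ?_
    linarith [angle_le hs.1, angle_le hsh, h_add a s h]
  · rw [add_comm]
    refine inner_add_nonneg_of_angle_add_angle_le_pi (hγ_speed _) (hγ_speed _) (hγ_speed _) ?_
    rw [← periodic_deriv hγL a]
    linarith [angle_le hhs, angle_le hs.2, h_add h s (a + L)]

lemma exists_angle_deriv_eq_pi_of_totalCurvature_le_two_pi (hγ : ContDiff ℝ 2 γ)
    (hγL : Function.Periodic γ L) (hL : 0 < L) (hγ_speed : ∀ s, ‖deriv γ s‖ = 1)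
    (hΘ : totalCurvature γ 0 L ≤ 2 * π) (a : ℝ) :
    ∃ h ∈ Icc a (a + L), angle (deriv γ a) (deriv γ h) = π := by
  have h_period := totalCurvature_period hγL a
  have h_cont : Continuous (totalCurvature γ a) :=
    continuous_iff_continuousAt.2 fun s ↦ (hasDerivAt_totalCurvature hγ a s).continuousAt
  have h_start : totalCurvature γ a a = 0 := intervalIntegral.integral_same
  have hΘ_nonneg : 0 ≤ totalCurvature γ a (a + L) :=
    (angle_nonneg _ _).trans (angle_deriv_le_totalCurvature hγ hγ_speed (by linarith))
  obtain ⟨h, hh, h_mid⟩ : ∃ h ∈ Icc a (a + L), totalCurvature γ a h = totalCurvature γ 0 L / 2 :=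
    intermediate_value_Icc (by linarith) h_cont.continuousOn ⟨by linarith, by linarith⟩
  -- If `γ' h ≠ -γ' a`, then `γ' a + γ' h` has a nonnegative, somewhere positive inner product with
  -- `γ'` over one period, so that `γ` cannot close up.
  have h_nonneg (s : ℝ) (hs : s ∈ Icc a (a + L)) :
      0 ≤ inner ℝ (deriv γ a + deriv γ h) (deriv γ s) :=
    inner_add_deriv_nonneg_of_totalCurvature_le_pi hγ hγL hγ_speed (by linarith)
      (by linarith [totalCurvature_add_totalCurvature hγ a h (a + L)]) hs
  have h_height (s : ℝ) : HasDerivAt (fun s ↦ inner ℝ (deriv γ a + deriv γ h) (γ s))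
      (inner ℝ (deriv γ a + deriv γ h) (deriv γ s)) s := by
    simpa using (hasDerivAt_const s _).inner ℝ (hγ.differentiable two_ne_zero s).hasDerivAt
  have h_orth : inner ℝ (deriv γ a + deriv γ h) (deriv γ a) = 0 :=
    deriv_left_eq_zero_of_nonneg_of_eq (b := a + L) (by linarith) h_height
      (continuous_const.inner hγ.differentiable_deriv_two.continuous) h_nonneg
      (by simp only [hγL a])
  exact ⟨h, hh, angle_eq_pi_of_inner_add_eq_zero (hγ_speed _) (hγ_speed _) h_orth⟩

/-- **Fenchel's theorem.** -/
theorem two_pi_le_totalCurvature (hγ : ContDiff ℝ 2 γ) (hγL : Function.Periodic γ L) (hL : 0 < L)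
    (hγ_speed : ∀ s, ‖deriv γ s‖ = 1) : 2 * π ≤ totalCurvature γ 0 L := by
  rcases le_total (2 * π) (totalCurvature γ 0 L) with hΘ | hΘ
  · exact hΘ
  obtain ⟨h, hh, h_angle⟩ :=
    exists_angle_deriv_eq_pi_of_totalCurvature_le_two_pi hγ hγL hL hγ_speed hΘ 0
  have h_forth := angle_deriv_le_totalCurvature hγ hγ_speed hh.1
  have h_back := angle_deriv_le_totalCurvature hγ hγ_speed hh.2
  rw [periodic_deriv hγL 0, angle_comm, zero_add] at h_back
  linarith [totalCurvature_add_totalCurvature hγ 0 h L]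

theorem inner_deriv_eq_cos_of_totalCurvature_le_two_pi (hγ : ContDiff ℝ 2 γ)
    (hγL : Function.Periodic γ L) (hL : 0 < L) (hγ_speed : ∀ s, ‖deriv γ s‖ = 1)
    (hΘ : totalCurvature γ 0 L ≤ 2 * π) (a s : ℝ) :
    inner ℝ (deriv γ a) (deriv γ s) = cos (totalCurvature γ a s) := by
  obtain ⟨h, hh, angle_antipode⟩ :=
    exists_angle_deriv_eq_pi_of_totalCurvature_le_two_pi hγ hγL hL hγ_speed hΘ a
  have hΘ_eq : totalCurvature γ 0 L = 2 * π :=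
    hΘ.antisymm (two_pi_le_totalCurvature hγ hγL hL hγ_speed)
  have h_add := totalCurvature_add_totalCurvature hγ
  have h_period := totalCurvature_period hγL
  have hTL := periodic_deriv hγL
  have angle_le {r s : ℝ} (hrs : r ≤ s) := angle_deriv_le_totalCurvature hγ hγ_speed hrs
  have angle_le_back {r : ℝ} (hr : r ≤ a + L) :
      angle (deriv γ a) (deriv γ r) ≤ totalCurvature γ r (a + L) := by
    rw [angle_comm, ← hTL a]
    exact angle_le hr
  -- Two arcs of length `π` of the tangent indicatrix join the antipodal points `γ' a` and `γ' h`,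
  -- so the triangle inequality is sharp along each.
  have one_period (r : ℝ) (hr : r ∈ Icc a (a + L)) :
      inner ℝ (deriv γ a) (deriv γ r) = cos (totalCurvature γ a r) := by
    rw [inner_eq_cos_angle_of_norm_eq_one (hγ_speed _) (hγ_speed _)]
    have h_triangle := angle_le_angle_add_angle (deriv γ a) (deriv γ r) (deriv γ h)
    rcases le_total r h with hrh | hhr
    · congr 1
      linarith [angle_le hr.1, angle_le hrh, angle_le_back hh.2, h_add a r h, h_add a h (a + L),
        h_period a]
    · have h_forth := angle_le hhr
      rw [angle_comm] at h_forth
      have h_angle : angle (deriv γ a) (deriv γ r) = 2 * π - totalCurvature γ a r := by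
        linarith [angle_le_back hr.2, angle_le hh.1, h_add a h r, h_add a r (a + L), h_period a]
      rw [h_angle, cos_two_pi_sub]
  have h_periodic : Function.Periodic
      (fun r ↦ inner ℝ (deriv γ a) (deriv γ r) - cos (totalCurvature γ a r)) L := by
    intro r
    simp only [hTL r, ← h_add a r (r + L), h_period r, hΘ_eq, cos_add_two_pi]
  obtain ⟨r, hr, hsr⟩ := h_periodic.exists_mem_Ico hL s a
  rw [← sub_eq_zero, hsr, one_period r (Ico_subset_Icc_self hr), sub_self]

theorem exists_great_circle_of_totalCurvature_le_two_pi (hγ : ContDiff ℝ 2 γ)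
    (hγL : Function.Periodic γ L) (hL : 0 < L) (hγ_speed : ∀ s, ‖deriv γ s‖ = 1)
    (hΘ : totalCurvature γ 0 L ≤ 2 * π) (a : ℝ) :
    ∃ u v : E, ‖u‖ = 1 ∧ ‖v‖ = 1 ∧ inner ℝ u v = 0 ∧
      ∀ s, deriv γ s = cos (totalCurvature γ a s) • u + sin (totalCurvature γ a s) • v := by
  have h_cos := inner_deriv_eq_cos_of_totalCurvature_le_two_pi hγ hγL hL hγ_speed hΘ
  have h_cont : Continuous (totalCurvature γ a) :=
    continuous_iff_continuousAt.2 fun s ↦ (hasDerivAt_totalCurvature hγ a s).continuousAt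
  have h_start : totalCurvature γ a a = 0 := intervalIntegral.integral_same
  obtain ⟨q, -, h_quarter⟩ : ∃ q ∈ Icc a (a + L), totalCurvature γ a q = π / 2 :=
    intermediate_value_Icc (by linarith) h_cont.continuousOn ⟨by linarith [pi_pos], by
      linarith [pi_pos, totalCurvature_period hγL a, two_pi_le_totalCurvature hγ hγL hL hγ_speed]⟩
  have h_orth : inner ℝ (deriv γ a) (deriv γ q) = 0 := by
    rw [h_cos, h_quarter, cos_pi_div_two]
  have h_sin (s : ℝ) : inner ℝ (deriv γ q) (deriv γ s) = sin (totalCurvature γ a s) := by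
    have h_shift : totalCurvature γ q s = totalCurvature γ a s - π / 2 := by
      linarith [totalCurvature_add_totalCurvature hγ a q s]
    rw [h_cos, h_shift, cos_sub_pi_div_two]
  exact ⟨deriv γ a, deriv γ q, hγ_speed a, hγ_speed q, h_orth, fun s ↦
    eq_cos_smul_add_sin_smul_of_inner_eq (hγ_speed a) (hγ_speed q) h_orth (hγ_speed s) (h_cos a s)
      (h_sin s)⟩

end Fenchel

lemma inner_acceleration_eq_neg_one {γ x : ℝ → E} {x' : E} {s : ℝ}
    (hγ : ∀ s, HasDerivAt γ (x s) s) (hx : HasDerivAt x x' s) (hγ_norm : ∀ s, ‖γ s‖ = 1)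
    (hx_norm : ‖x s‖ = 1) : inner ℝ (γ s) x' = -1 := by
  have h_zero : HasDerivAt (fun _ : ℝ ↦ (0 : ℝ)) (inner ℝ (γ s) x' + 1) s := by
    simpa only [inner_deriv_eq_zero_of_norm_eq_one (hγ _) hγ_norm, real_inner_self_eq_norm_sq,
      hx_norm, one_pow] using (hγ s).inner ℝ hx
  linarith [h_zero.unique (hasDerivAt_const s 0)]

theorem speed_const_of_tangent_mem_great_circle {γ : ℝ → E} {θ κ : ℝ → ℝ} {u v : E}
    (hγ : ∀ s, HasDerivAt γ (cos (θ s) • u + sin (θ s) • v) s) (hγ_norm : ∀ s, ‖γ s‖ = 1)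
    (hu : ‖u‖ = 1) (hv : ‖v‖ = 1) (huv : inner ℝ u v = 0) (hθ : ∀ s, HasDerivAt θ (κ s) s)
    (s₁ s₂ : ℝ) : κ s₁ = κ s₂ := by
  let e (r : ℝ) : E := cos r • u + sin r • v
  let n (r : ℝ) : E := -sin r • u + cos r • v
  have he (r : ℝ) : HasDerivAt e (n r) r :=
    ((hasDerivAt_cos r).smul_const u).add ((hasDerivAt_sin r).smul_const v)
  have hn (r : ℝ) : HasDerivAt n (-e r) r := by
    refine (((hasDerivAt_sin r).neg.smul_const u).add
      ((hasDerivAt_cos r).smul_const v)).congr_deriv ?_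
    simp only [e]
    module
  have he_norm (r : ℝ) : ‖e r‖ = 1 := norm_cos_smul_add_sin_smul hu hv huv r
  have h_tangent (s : ℝ) : HasDerivAt (fun s ↦ e (θ s)) (κ s • n (θ s)) s :=
    (he _).scomp s (hθ s)
  have h_height (s : ℝ) : HasDerivAt (fun s ↦ inner ℝ (γ s) (n (θ s))) 0 s := by
    refine ((hγ s).inner ℝ ((hn _).scomp s (hθ s))).congr_deriv ?_
    have h_orth : inner ℝ (γ s) (e (θ s)) = 0 := inner_deriv_eq_zero_of_norm_eq_one (hγ s) hγ_norm
    rw [inner_smul_right, inner_neg_right, h_orth, neg_zero, mul_zero, zero_add]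
    exact inner_deriv_eq_zero_of_norm_eq_one (he _) he_norm
  have h_height_const : inner ℝ (γ s₁) (n (θ s₁)) = inner ℝ (γ s₂) (n (θ s₂)) :=
    is_const_of_deriv_eq_zero (fun s ↦ (h_height s).differentiableAt)
      (fun s ↦ (h_height s).deriv) s₁ s₂
  have h_curvature (s : ℝ) : κ s * inner ℝ (γ s) (n (θ s)) = -1 := by
    rw [← real_inner_smul_right]
    exact inner_acceleration_eq_neg_one hγ (h_tangent s) hγ_norm (he_norm _)
  have h_height_ne : inner ℝ (γ s₂) (n (θ s₂)) ≠ 0 :=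
    right_ne_zero_of_mul (h_curvature s₂ ▸ neg_ne_zero.2 one_ne_zero)
  apply mul_right_cancel₀ h_height_ne
  rw [h_curvature, ← h_height_const, h_curvature]

variable {γ : ℝ → E} {L : ℝ}

lemma norm_deriv_deriv_ne_zero_of_norm_eq_one (hγ : ContDiff ℝ 2 γ)
    (hγ_speed : ∀ s, ‖deriv γ s‖ = 1) (hγ_norm : ∀ s, ‖γ s‖ = 1) (s : ℝ) :
    ‖deriv (deriv γ) s‖ ≠ 0 := by
  have h_inner : inner ℝ (γ s) (deriv (deriv γ) s) = -1 := inner_acceleration_eq_neg_one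
    (fun s ↦ (hγ.differentiable two_ne_zero s).hasDerivAt)
    (hγ.differentiable_deriv_two s).hasDerivAt hγ_norm (hγ_speed s)
  intro h_zero
  simp [norm_eq_zero.1 h_zero] at h_inner

theorem norm_deriv_deriv_const_of_totalCurvature_le_two_pi (hγ : ContDiff ℝ 2 γ)
    (hγL : Function.Periodic γ L) (hL : 0 < L) (hγ_speed : ∀ s, ‖deriv γ s‖ = 1)
    (hγ_norm : ∀ s, ‖γ s‖ = 1) (hΘ : totalCurvature γ 0 L ≤ 2 * π) (s₁ s₂ : ℝ) :
    ‖deriv (deriv γ) s₁‖ = ‖deriv (deriv γ) s₂‖ := by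
  obtain ⟨u, v, hu, hv, huv, h_circle⟩ :=
    exists_great_circle_of_totalCurvature_le_two_pi hγ hγL hL hγ_speed hΘ 0
  exact speed_const_of_tangent_mem_great_circle
    (fun s ↦ h_circle s ▸ (hγ.differentiable two_ne_zero s).hasDerivAt) hγ_norm hu hv huv
    (hasDerivAt_totalCurvature hγ 0) s₁ s₂

end SphericalCurve

section PartialDerivatives

variable {F : Type*} [NormedAddCommGroup F] [NormedSpace ℝ F] {f : ℝ → ℝ → F} {t s : ℝ}

lemma deriv_left_eq_fderiv_uncurry (hf : DifferentiableAt ℝ (Function.uncurry f) (t, s)) :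
    deriv (fun t' ↦ f t' s) t = fderiv ℝ (Function.uncurry f) (t, s) (1, 0) :=
  (hf.hasFDerivAt.comp_hasDerivAt (f := fun t' ↦ (t', s)) t
    ((hasDerivAt_id t).prodMk (hasDerivAt_const t s))).deriv

lemma deriv_right_eq_fderiv_uncurry (hf : DifferentiableAt ℝ (Function.uncurry f) (t, s)) :
    deriv (fun s' ↦ f t s') s = fderiv ℝ (Function.uncurry f) (t, s) (0, 1) :=
  (hf.hasFDerivAt.comp_hasDerivAt (f := fun s' ↦ (t, s')) s
    ((hasDerivAt_const s t).prodMk (hasDerivAt_id s))).deriv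

end PartialDerivatives

theorem schroedinger_equality_hopf_torus_implies_constant_curvature_general {E : Type*}
    [NormedAddCommGroup E] [InnerProductSpace ℝ E] {L T : ℝ} (hL : 0 < L) (hT : 0 < T) {γ : ℝ → E}
    (hγ : ContDiff ℝ 2 γ) (hγL : Function.Periodic γ L) (hγ_speed : ∀ s, ‖deriv γ s‖ = 1)
    (hγ_norm : ∀ s, ‖γ s‖ = 1) (A : ℝ) {f : ℝ → ℝ → ℝ} (hf : ContDiff ℝ 1 (Function.uncurry f))
    (hfT : ∀ t s, f (t + T) s = f t s) (hfL : ∀ t s, f t (s + L) = f t s)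
    (hf_ne : ∃ t s, f t s ≠ 0)
    (h_eq : ∫ t in 0..T, ∫ s in 0..L,
        ((1 + A ^ 2 / L ^ 2) * deriv (fun t' ↦ f t' s) t ^ 2 + 4 * deriv (fun s' ↦ f t s') s ^ 2
          + 4 * A / L * deriv (fun t' ↦ f t' s) t * deriv (fun s' ↦ f t s') s
          + ‖deriv (deriv γ) s‖ ^ 2 * f t s ^ 2) =
      4 * π ^ 2 / L ^ 2 * ∫ t in 0..T, ∫ s in 0..L, f t s ^ 2) (s₁ s₂ : ℝ) :
    ‖deriv (deriv γ) s₁‖ = ‖deriv (deriv γ) s₂‖ := by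
  rcases le_or_gt (totalCurvature γ 0 L) (2 * π) with hΘ | hΘ
  · exact norm_deriv_deriv_const_of_totalCurvature_le_two_pi hγ hγL hL hγ_speed hγ_norm hΘ s₁ s₂
  have hf_diff := hf.differentiable one_ne_zero
  have hf_uncurry_ne : Function.uncurry f ≠ 0 :=
    let ⟨t, s, hts⟩ := hf_ne
    Function.ne_iff.2 ⟨(t, s), hts⟩
  have h_gt := schroedinger_form_gt_of_two_pi_lt_integral (continuous_norm_deriv_deriv hγ)
    (norm_deriv_deriv_ne_zero_of_norm_eq_one hγ hγ_speed hγ_norm) (norm_deriv_deriv_periodic hγL)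
    hΘ hL hT hf (fun p ↦ by simp [Function.uncurry_def, hfT])
    (fun p ↦ by simp [Function.uncurry_def, hfL]) hf_uncurry_ne A
  simp only [deriv_left_eq_fderiv_uncurry (hf_diff _), deriv_right_eq_fderiv_uncurry (hf_diff _)]
    at h_eq
  exact absurd h_eq h_gt.ne'

/-- **Equality case of Theorem 2.** If a simple closed spherical curve bounding a region of
area `A` admits a nonzero smooth doubly periodic function `f` attaining equality in the
lower bound `4π²/L² ≤ μ₁(P_{A,L})` for the two-dimensional periodic Schrödinger operator
`P_{A,L}`, then the curvature `κ(s) = ‖γ''(s)‖` is constant. -/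
theorem schroedinger_equality_hopf_torus_implies_constant_curvature
    (L : ℝ) (hL : 0 < L) (γ : ℝ → EuclideanSpace ℝ (Fin 3))
    (hγ : ContDiff ℝ (⊤ : ℕ∞) γ)
    (hper : ∀ s : ℝ, γ (s + L) = γ s)
    (hunit : ∀ s : ℝ, ‖deriv γ s‖ = 1)
    (hsph : ∀ s : ℝ, ‖γ s‖ = 1)
    (hsimple : Set.InjOn γ (Set.Ico 0 L))
    (x : EuclideanSpace ℝ (Fin 3))
    (hx : x ∈ Metric.sphere (0 : EuclideanSpace ℝ (Fin 3)) 1 \ Set.range γ)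
    (A : ℝ)
    (hA : A = (μH[2]
      (connectedComponentIn (Metric.sphere (0 : EuclideanSpace ℝ (Fin 3)) 1 \ Set.range γ) x)).toReal)
    (f : ℝ → ℝ → ℝ) (hf : ContDiff ℝ (⊤ : ℕ∞) (Function.uncurry f))
    (hfpert : ∀ t s : ℝ, f (t + 2 * π) s = f t s)
    (hfpers : ∀ t s : ℝ, f t (s + L) = f t s)
    (hfne : ∃ t s : ℝ, f t s ≠ 0)
    (heq : (∫ t in (0:ℝ)..(2 * π), ∫ s in (0:ℝ)..L,
        ((1 + A^2 / L^2) * (deriv (fun t' => f t' s) t)^2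
          + 4 * (deriv (fun s' => f t s') s)^2
          + (4 * A / L) * (deriv (fun t' => f t' s) t) * (deriv (fun s' => f t s') s)
          + ‖deriv (deriv γ) s‖^2 * (f t s)^2))
      = (4 * π^2 / L^2) * ∫ t in (0:ℝ)..(2 * π), ∫ s in (0:ℝ)..L, (f t s)^2) :
    ∀ s₁ s₂ : ℝ, ‖deriv (deriv γ) s₁‖ = ‖deriv (deriv γ) s₂‖ := by
  exact schroedinger_equality_hopf_torus_implies_constant_curvature_general hL two_pi_pos
    (hγ.of_le (by norm_cast)) hper hunit hsph A (hf.of_le (by norm_cast)) hfpert hfpers hfne heq
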